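/- Let c_d = π^{d/2} / ( 12^d Γ(d/2 + 1) ). For every dimension d ≥ 1, every N ≥ 1 and every integer n ≥ 1, if X_1, …, X_N are i.i.d. uniformly distributed on [0,1]^d, then P( ρ(X_N, X) > 2/n ) ≤ c_d^{−1} n^d exp( − N c_d n^{−d} ). -/

import Mathlib

open MeasureTheory

/-- The unit cube `[0,1]^d` in Euclidean space. -/
def unitCube (d : ℕ) : Set (EuclideanSpace ℝ (Fin d)) :=
  {y | ∀ i, y i ∈ Set.Icc (0 : ℝ) 1}

/-- The uniform distribution on `[0,1]^d` (normalized Lebesgue measure). -/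
noncomputable def uniformCube (d : ℕ) : Measure (EuclideanSpace ℝ (Fin d)) :=
  volume.restrict (unitCube d)

/-- The covering radius `ρ(X_N, X) = sup_{x ∈ [0,1]^d} min_{k ≤ N} ‖x - X_k‖`. -/
noncomputable def cubeCovRad (d : ℕ) {N : ℕ} (xs : Fin N → EuclideanSpace ℝ (Fin d)) : ℝ :=
  ⨆ x : unitCube d, ⨅ k : Fin N, dist (x : EuclideanSpace ℝ (Fin d)) (xs k)


open Metric
open scoped NNReal Finset

/-!
Suppose every ball of radius `r` centred in `K` has probability at least `q`. The balls around a
`2r`-separated subset of `K` are disjoint, so a maximal such subset `S` has at most `q⁻¹` points,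
and it is a `2r`-net. If every ball of radius `r` around a point of `S` contains a sample point, the
covering radius is at most `3r`; a given ball is missed with probability at most
`(1 - q) ^ N ≤ exp (-N q)`, and a union bound over `S` finishes the argument. For `x` in the cube
and `‖v‖ ≤ 1/2`, one of the `2 ^ d` vectors `w` obtained from `v` by changing signs of coordinates
has `x + w` in the cube, so the cube contains at least a fraction `2⁻ᵈ` of every ball of radius at
most `1/2` centred in it.
-/

lemma measure_pi_forall_notMem_le {α ι : Type*} [MeasurableSpace α] [Fintype ι] {μ : Measure α}
    [IsProbabilityMeasure μ] {A : Set α} {q : ℝ} (hA : MeasurableSet A) (hq : q ≤ μ.real A) :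
    (Measure.pi fun _ : ι => μ) {xs | ∀ k, xs k ∉ A} ≤
      ENNReal.ofReal (Real.exp (-Fintype.card ι * q)) := by
  have hmiss : μ Aᶜ ≤ ENNReal.ofReal (Real.exp (-q)) := by
    rw [← ofReal_measureReal, probReal_compl_eq_one_sub hA]
    exact ENNReal.ofReal_le_ofReal (by linarith [Real.one_sub_le_exp_neg q])
  calc (Measure.pi fun _ : ι => μ) {xs | ∀ k, xs k ∉ A}
      = (Measure.pi fun _ : ι => μ) (Set.univ.pi fun _ => Aᶜ) := by
        congr 1; ext xs; simp
    _ = μ Aᶜ ^ Fintype.card ι := by simp [Measure.pi_pi]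
    _ ≤ ENNReal.ofReal (Real.exp (-q)) ^ Fintype.card ι := by gcongr
    _ = ENNReal.ofReal (Real.exp (-Fintype.card ι * q)) := by
      rw [← ENNReal.ofReal_pow (Real.exp_pos _).le, ← Real.exp_nat_mul, neg_mul_comm]

section CoveringRadius

variable {α ι : Type*} [PseudoMetricSpace α] {K : Set α}

/-- The covering radius `sup_{x ∈ K} min_k dist x (xs k)` of a family of points with respect to a
set `K`. It is real-valued, so it is `0` when the supremum is infinite and when the family is
empty. -/
noncomputable def coveringRadius (K : Set α) (xs : ι → α) : ℝ :=
  ⨆ x : K, ⨅ k, dist (x : α) (xs k)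

lemma coveringRadius_le_add_of_isCover {ε δ : ℝ≥0} {S : Set α} {xs : ι → α} (hS : IsCover ε K S)
    (hxs : ∀ y ∈ S, ∃ k, xs k ∈ ball y δ) : coveringRadius K xs ≤ ε + δ := by
  refine Real.iSup_le (fun x => ?_) (by positivity)
  obtain ⟨y, hyS, hxy⟩ := Set.mem_iUnion₂.1 (hS.subset_iUnion_closedBall x.2)
  obtain ⟨k, hk⟩ := hxs y hyS
  have hbdd : BddBelow (Set.range fun j => dist (x : α) (xs j)) :=
    ⟨0, Set.forall_mem_range.2 fun _ => dist_nonneg⟩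
  calc ⨅ j, dist (x : α) (xs j) ≤ dist (x : α) (xs k) := ciInf_le hbdd k
    _ ≤ dist (x : α) y + dist (xs k) y := dist_triangle_right _ _ _
    _ ≤ ε + δ := add_le_add hxy (mem_ball.1 hk).le

lemma pairwiseDisjoint_ball_of_isSeparated {r : ℝ≥0} {S : Set α}
    (hS : IsSeparated (2 * r : ℝ≥0) S) : S.PairwiseDisjoint fun y => ball y (r : ℝ) := by
  intro y hy z hz hyz
  have hdist : 2 * (r : ℝ) < dist y z := by
    have hedist : ((2 * r : ℝ≥0) : ENNReal) < edist y z := hS hy hz hyz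
    rw [edist_nndist, ENNReal.coe_lt_coe] at hedist
    exact_mod_cast hedist
  exact ball_disjoint_ball (by linarith)

variable [MeasurableSpace α] [OpensMeasurableSpace α] {μ : Measure α} [IsProbabilityMeasure μ]
  {r : ℝ≥0} {q : ℝ}

lemma card_le_inv_of_isSeparated (hq : 0 < q) {S : Finset α}
    (hS : IsSeparated (2 * r : ℝ≥0) (S : Set α)) (hball : ∀ y ∈ S, q ≤ μ.real (ball y r)) :
    (#S : ℝ) ≤ q⁻¹ := by
  rw [← one_div, le_div_iff₀ hq]
  calc #S * q = #S • q := (nsmul_eq_mul _ _).symm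
    _ ≤ ∑ y ∈ S, μ.real (ball y r) := S.card_nsmul_le_sum _ _ hball
    _ ≤ μ.real Set.univ :=
      sum_measureReal_le_measureReal_univ (fun _ _ => measurableSet_ball)
        (pairwiseDisjoint_ball_of_isSeparated hS)
    _ = 1 := probReal_univ

lemma packingNumber_le_floor_inv (hq : 0 < q) (hball : ∀ x ∈ K, q ≤ μ.real (ball x r)) :
    packingNumber (2 * r) K ≤ ⌊q⁻¹⌋₊ := by
  refine iSup_le fun C => iSup₂_le fun hCK hC => le_of_not_gt fun hlt => ?_
  obtain ⟨T, hTC, hTcard⟩ := Set.exists_subset_encard_eq (Order.add_one_le_of_lt hlt)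
  obtain ⟨S, rfl⟩ := (Set.finite_of_encard_eq_coe hTcard).exists_finset_coe
  have hSle : #S ≤ ⌊q⁻¹⌋₊ := Nat.le_floor <|
    card_le_inv_of_isSeparated hq (hC.subset hTC) fun y hy => hball y (hCK (hTC hy))
  rw [Set.encard_coe_eq_coe_finsetCard] at hTcard
  norm_cast at hTcard
  omega

lemma exists_finset_isCover_card_le_inv (hq : 0 < q) (hball : ∀ x ∈ K, q ≤ μ.real (ball x r)) :
    ∃ S : Finset α, (S : Set α) ⊆ K ∧ IsCover (2 * r) K S ∧ (#S : ℝ) ≤ q⁻¹ := by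
  have hfin : packingNumber (2 * r) K ≠ ⊤ :=
    ne_top_of_le_ne_top (ENat.natCast_ne_top _) (packingNumber_le_floor_inv hq hball)
  obtain ⟨S, hS⟩ : ∃ S : Finset α, (S : Set α) = maximalSeparatedSet (2 * r) K := by
    refine (Set.encard_ne_top_iff.1 ?_).exists_finset_coe
    rwa [encard_maximalSeparatedSet hfin]
  have hSK : (S : Set α) ⊆ K := hS ▸ maximalSeparatedSet_subset
  have hSsep : IsSeparated (2 * r : ℝ≥0) (S : Set α) := hS ▸ isSeparated_maximalSeparatedSet
  exact ⟨S, hSK, hS ▸ isCover_maximalSeparatedSet hfin,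
    card_le_inv_of_isSeparated hq hSsep fun y hy => hball y (hSK hy)⟩

theorem measure_pi_lt_coveringRadius_le [Fintype ι] (hq : 0 < q)
    (hball : ∀ x ∈ K, q ≤ μ.real (ball x r)) :
    (Measure.pi fun _ : ι => μ) {xs | 3 * (r : ℝ) < coveringRadius K xs} ≤
      ENNReal.ofReal (q⁻¹ * Real.exp (-Fintype.card ι * q)) := by
  obtain ⟨S, hSK, hScover, hScard⟩ := exists_finset_isCover_card_le_inv hq hball
  have hsub : {xs : ι → α | 3 * (r : ℝ) < coveringRadius K xs} ⊆
      ⋃ y ∈ S, {xs | ∀ k, xs k ∉ ball y r} := by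
    intro xs hxs
    by_contra hmiss
    have hhit : ∀ y ∈ S, ∃ k, xs k ∈ ball y (r : ℝ) := by simpa using hmiss
    have hle : coveringRadius K xs ≤ (2 * r : ℝ≥0) + r :=
      coveringRadius_le_add_of_isCover hScover hhit
    rw [← NNReal.coe_add, ← add_one_mul, two_add_one_eq_three] at hle
    exact hle.not_gt hxs
  calc (Measure.pi fun _ : ι => μ) {xs | 3 * (r : ℝ) < coveringRadius K xs}
      ≤ ∑ y ∈ S, (Measure.pi fun _ : ι => μ) {xs | ∀ k, xs k ∉ ball y r} :=
        (measure_mono hsub).trans (measure_biUnion_finset_le _ _)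
    _ ≤ ∑ _y ∈ S, ENNReal.ofReal (Real.exp (-Fintype.card ι * q)) :=
        Finset.sum_le_sum fun y hy =>
          measure_pi_forall_notMem_le measurableSet_ball (hball y (hSK hy))
    _ = ENNReal.ofReal (#S * Real.exp (-Fintype.card ι * q)) := by
        rw [ENNReal.ofReal_mul (by positivity)]; simp
    _ ≤ ENNReal.ofReal (q⁻¹ * Real.exp (-Fintype.card ι * q)) := by gcongr

end CoveringRadius

section SignFlip

variable {ι : Type*} [Fintype ι] [DecidableEq ι]

/-- The linear isometry of Euclidean space that negates the coordinates in `S`. -/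
noncomputable def signFlip (S : Finset ι) : EuclideanSpace ℝ ι ≃ₗᵢ[ℝ] EuclideanSpace ℝ ι :=
  LinearIsometryEquiv.piLpCongrRight 2 fun i =>
    if i ∈ S then LinearIsometryEquiv.neg ℝ else LinearIsometryEquiv.refl ℝ ℝ

lemma signFlip_apply (S : Finset ι) (v : EuclideanSpace ℝ ι) (i : ι) :
    signFlip S v i = if i ∈ S then -v i else v i := by
  simp only [signFlip, LinearIsometryEquiv.piLpCongrRight_apply]
  split_ifs <;> simp

lemma volume_le_two_pow_mul_of_exists_signFlip_mem {A B : Set (EuclideanSpace ℝ ι)}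
    (hA : NullMeasurableSet A) (h : ∀ v ∈ B, ∃ S, signFlip S v ∈ A) :
    volume B ≤ 2 ^ Fintype.card ι * volume A :=
  calc volume B ≤ volume (⋃ S, signFlip S ⁻¹' A) :=
        measure_mono fun v hv => Set.mem_iUnion.2 (h v hv)
    _ ≤ ∑ S, volume (signFlip S ⁻¹' A) := measure_iUnion_fintype_le _ _
    _ = ∑ _S : Finset ι, volume A := Finset.sum_congr rfl fun S _ =>
        (signFlip S).measurePreserving.measure_preimage hA
    _ = 2 ^ Fintype.card ι * volume A := by simp

end SignFlip

lemma volume_real_ball {ι : Type*} [Fintype ι] [Nonempty ι] (x : EuclideanSpace ℝ ι) {r : ℝ}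
    (hr : 0 ≤ r) :
    volume.real (ball x r) = r ^ Fintype.card ι *
      (Real.pi ^ ((Fintype.card ι : ℝ) / 2) / Real.Gamma ((Fintype.card ι : ℝ) / 2 + 1)) := by
  have hpi : √Real.pi ^ Fintype.card ι = Real.pi ^ ((Fintype.card ι : ℝ) / 2) := by
    rw [Real.sqrt_eq_rpow, ← Real.rpow_mul_natCast Real.pi_pos.le, one_div_mul_eq_div]
  have : 0 < Real.Gamma ((Fintype.card ι : ℝ) / 2 + 1) := Real.Gamma_pos_of_pos (by positivity)
  rw [measureReal_def, EuclideanSpace.volume_ball, hpi, ENNReal.toReal_mul, ENNReal.toReal_pow,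
    ENNReal.toReal_ofReal hr, ENNReal.toReal_ofReal (by positivity)]

section UnitCube

variable {d : ℕ} {x : EuclideanSpace ℝ (Fin d)} {r : ℝ}

lemma unitCube_eq_preimage_ofLp (d : ℕ) :
    unitCube d = WithLp.ofLp ⁻¹' Set.univ.pi fun _ => Set.Icc (0 : ℝ) 1 := by
  ext y
  simp [unitCube, -Set.pi_univ_Icc]

lemma measurableSet_unitCube (d : ℕ) : MeasurableSet (unitCube d) := by
  rw [unitCube_eq_preimage_ofLp]
  exact (PiLp.volume_preserving_ofLp (Fin d)).measurable
    (MeasurableSet.univ_pi fun _ => measurableSet_Icc)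

lemma volume_unitCube (d : ℕ) : volume (unitCube d) = 1 := by
  rw [unitCube_eq_preimage_ofLp, (PiLp.volume_preserving_ofLp (Fin d)).measure_preimage
    (MeasurableSet.univ_pi fun _ => measurableSet_Icc).nullMeasurableSet, volume_pi_pi]
  simp

instance isProbabilityMeasure_uniformCube (d : ℕ) : IsProbabilityMeasure (uniformCube d) :=
  ⟨by rw [uniformCube, Measure.restrict_apply_univ, volume_unitCube]⟩

lemma sub_mem_Icc_of_add_notMem_Icc {a b y v : ℝ} (hy : y ∈ Set.Icc a b) (hv : |v| ≤ (b - a) / 2)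
    (hadd : y + v ∉ Set.Icc a b) : y - v ∈ Set.Icc a b := by
  grind

lemma exists_add_signFlip_mem_unitCube (hx : x ∈ unitCube d) {v : EuclideanSpace ℝ (Fin d)}
    (hv : ‖v‖ ≤ 1 / 2) : ∃ S, x + signFlip S v ∈ unitCube d := by
  refine ⟨Finset.univ.filter fun i => x i + v i ∉ Set.Icc (0 : ℝ) 1, fun i => ?_⟩
  rw [PiLp.add_apply, signFlip_apply]
  split_ifs with hi
  · have hvi : |v i| ≤ (1 - 0) / 2 := by
      linarith [Real.norm_eq_abs (v i) ▸ PiLp.norm_apply_le v i]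
    rw [← sub_eq_add_neg]
    exact sub_mem_Icc_of_add_notMem_Icc (hx i) hvi (by simpa using hi)
  · simpa using hi

lemma volume_ball_le_two_pow_mul_uniformCube_ball (hx : x ∈ unitCube d) (hr : r ≤ 1 / 2) :
    volume (ball x r) ≤ 2 ^ d * uniformCube d (ball x r) := by
  have hmeas : MeasurableSet (ball x r ∩ unitCube d) :=
    measurableSet_ball.inter (measurableSet_unitCube d)
  have hflip : ∀ v ∈ ball (0 : EuclideanSpace ℝ (Fin d)) r,
      ∃ S, signFlip S v ∈ (x + ·) ⁻¹' (ball x r ∩ unitCube d) := by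
    intro v hv
    rw [mem_ball_zero_iff] at hv
    obtain ⟨S, hS⟩ := exists_add_signFlip_mem_unitCube hx (hv.le.trans hr)
    exact ⟨S, by simpa using hv, hS⟩
  calc volume (ball x r) = volume (ball (0 : EuclideanSpace ℝ (Fin d)) r) :=
        Measure.addHaar_ball_center _ _ _
    _ ≤ 2 ^ d * volume ((x + ·) ⁻¹' (ball x r ∩ unitCube d)) := by
        simpa using volume_le_two_pow_mul_of_exists_signFlip_mem
          (measurable_const_add x hmeas).nullMeasurableSet hflip
    _ = 2 ^ d * uniformCube d (ball x r) := by
        rw [measure_preimage_add, uniformCube, Measure.restrict_apply measurableSet_ball]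

lemma half_pow_mul_le_uniformCube_real_ball [NeZero d] (hx : x ∈ unitCube d) (hr₀ : 0 ≤ r)
    (hr : r ≤ 1 / 2) :
    (r / 2) ^ d * (Real.pi ^ ((d : ℝ) / 2) / Real.Gamma ((d : ℝ) / 2 + 1)) ≤
      (uniformCube d).real (ball x r) := by
  have hle : volume.real (ball x r) ≤ 2 ^ d * (uniformCube d).real (ball x r) := by
    simpa [measureReal_def] using ENNReal.toReal_mono (by finiteness)
      (volume_ball_le_two_pow_mul_uniformCube_ball hx hr)
  rw [volume_real_ball x hr₀, Fintype.card_fin] at hle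
  rw [div_pow, div_mul_eq_mul_div, div_le_iff₀' (by positivity)]
  exact hle

end UnitCube

theorem stmt_19_general (d : ℕ) (hd : 1 ≤ d) (N : ℕ) (t : ℝ) (ht : 1 / 3 ≤ t) :
    (Measure.pi fun _ : Fin N => uniformCube d)
        {xs : Fin N → EuclideanSpace ℝ (Fin d) | 1 / (2 * t) < cubeCovRad d xs} ≤
      ENNReal.ofReal
        ((Real.pi ^ ((d : ℝ) / 2) / (12 ^ d * Real.Gamma ((d : ℝ) / 2 + 1)))⁻¹ * t ^ d *
          Real.exp (-(N : ℝ) * (Real.pi ^ ((d : ℝ) / 2) / (12 ^ d * Real.Gamma ((d : ℝ) / 2 + 1))) *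
            (t ^ d)⁻¹)) := by
  have : NeZero d := ⟨by omega⟩
  have : 0 < t := by linarith
  have : 0 < Real.Gamma ((d : ℝ) / 2 + 1) := Real.Gamma_pos_of_pos (by positivity)
  set c : ℝ := Real.pi ^ ((d : ℝ) / 2) / (12 ^ d * Real.Gamma ((d : ℝ) / 2 + 1)) with hc
  -- The radius `r = 1 / (6t)` is chosen so that `(r / 2) ^ d = (12 ^ d * t ^ d)⁻¹`.
  have hball : ∀ x ∈ unitCube d, c * (t ^ d)⁻¹ ≤ (uniformCube d).real (ball x (1 / (6 * t))) := by
    intro x hx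
    have hr : 1 / (6 * t) ≤ 1 / 2 := one_div_le_one_div_of_le two_pos (by linarith)
    convert half_pow_mul_le_uniformCube_real_ball hx (by positivity) hr using 1
    rw [hc, div_div, show 6 * t * 2 = 12 * t by ring, div_pow, one_pow, mul_pow]
    field_simp
  lift 1 / (6 * t) to ℝ≥0 using by positivity with r hr
  have htail := measure_pi_lt_coveringRadius_le (ι := Fin N) (r := r) (by positivity) hball
  have hthree : 3 * (r : ℝ) = 1 / (2 * t) := by rw [hr]; field_simp; norm_num
  rw [Fintype.card_fin, hthree, mul_inv, inv_inv, ← mul_assoc (-(N : ℝ))] at htail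
  exact htail

/-- with `c_d = π^{d/2}/(12^d Γ(d/2+1))`, for i.i.d. uniform points on the
cube, `P(ρ(X_N, X) > 2/n) ≤ c_d⁻¹ n^d exp(-N c_d n^{-d})`. -/
theorem stmt_19 (d : ℕ) (hd : 1 ≤ d) (N : ℕ) (hN : 1 ≤ N) (n : ℕ) (hn : 1 ≤ n) :
    (Measure.pi fun _ : Fin N => uniformCube d)
        {xs : Fin N → EuclideanSpace ℝ (Fin d) | 2 / (n : ℝ) < cubeCovRad d xs} ≤
      ENNReal.ofReal
        ((Real.pi ^ ((d : ℝ) / 2) / (12 ^ d * Real.Gamma ((d : ℝ) / 2 + 1)))⁻¹ * (n : ℝ) ^ d *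
          Real.exp (-(N : ℝ) * (Real.pi ^ ((d : ℝ) / 2) / (12 ^ d * Real.Gamma ((d : ℝ) / 2 + 1))) *
            ((n : ℝ) ^ d)⁻¹)) := by
  have hthreshold : 1 / (2 * (n : ℝ)) ≤ 2 / n := by rw [← div_div]; gcongr; norm_num
  exact (measure_mono fun _ hxs => hthreshold.trans_lt hxs).trans
    (stmt_19_general d hd N n (by linarith [Nat.one_le_cast (α := ℝ).2 hn]))
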